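/- Let C be a binary linear code of length N with weight distribution A(w), used over the binary erasure channel, and let ε* ∈ (0,1) satisfy P_MAP(ε*) = 1/2. Then for every integer 1 ≤ W ≤ N and every ε* < ε < 1: P_MAP(ε) ≥ Φ(√W·(√(−ln ε*) − √(−ln ε))) − 2·√(−ln ε*)·√W·A(W, ε). -/

import Mathlib

open scoped Classical
open Finset

noncomputable section

/-- Erasure patterns and codewords: vectors in 𝔽₂^N. -/
abbrev Pattern (N : ℕ) := Fin N → ZMod 2

/-- Hamming weight. -/
def wH {N : ℕ} (x : Pattern N) : ℕ := hammingNorm x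

/-- `ω` covers `x` if the support of `x` is contained in the support of `ω`. -/
def covers {N : ℕ} (ω x : Pattern N) : Prop := ∀ i, x i ≠ 0 → ω i ≠ 0

/-- Product Bernoulli(ε) measure of a set of patterns. -/
def muE {N : ℕ} (ε : ℝ) (S : Finset (Pattern N)) : ℝ :=
  ∑ ω ∈ S, ε ^ wH ω * (1 - ε) ^ (N - wH ω)

/-- Erasure patterns causing a block-MAP error over the BEC. -/
def errBEC {N : ℕ} (C : Submodule (ZMod 2) (Pattern N)) : Finset (Pattern N) :=
  univ.filter (fun ω => ∃ x ∈ C, x ≠ 0 ∧ covers ω x)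

/-- Block-MAP error probability over BEC(ε). -/
def Pmap {N : ℕ} (C : Submodule (ZMod 2) (Pattern N)) (ε : ℝ) : ℝ :=
  muE ε (errBEC C)

/-- Weight distribution A(w) of the code. -/
def Aw {N : ℕ} (C : Submodule (ZMod 2) (Pattern N)) (w : ℕ) : ℕ :=
  (univ.filter (fun x : Pattern N => x ∈ C ∧ wH x = w)).card

/-- A(W, z) = ∑_{w=1}^W A(w) z^w. -/
def AW {N : ℕ} (C : Submodule (ZMod 2) (Pattern N)) (W : ℕ) (z : ℝ) : ℝ :=
  ∑ w ∈ Finset.Icc 1 W, (Aw C w : ℝ) * z ^ w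

/-- Standard normal CDF. -/
def Phi (x : ℝ) : ℝ := ∫ u in Set.Iic x, Real.exp (-u ^ 2 / 2) / Real.sqrt (2 * Real.pi)

/-- Standard normal density. -/
def gphi (u : ℝ) : ℝ := Real.exp (-u ^ 2 / 2) / Real.sqrt (2 * Real.pi)

lemma gphi_pos (u : ℝ) : 0 < gphi u := by
  unfold gphi; positivity

lemma gphi_hasDeriv (u : ℝ) : HasDerivAt gphi (-u * gphi u) u := by
  unfold gphi
  have h1 : HasDerivAt (fun u : ℝ => -u ^ 2 / 2) (-u) u := by
    have := ((hasDerivAt_pow 2 u).neg).div_const 2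
    refine this.congr_deriv ?_
    simp
    ring
  have := (h1.exp).div_const (Real.sqrt (2 * Real.pi))
  refine this.congr_deriv ?_
  ring

lemma gphi_cont : Continuous gphi :=
  continuous_iff_continuousAt.2 fun u => (gphi_hasDeriv u).continuousAt

lemma gphi_eq : gphi = ProbabilityTheory.gaussianPDFReal 0 1 := by
  funext u
  simp only [gphi, ProbabilityTheory.gaussianPDFReal]
  simp
  ring

lemma gphi_integrable : MeasureTheory.Integrable gphi := by
  rw [gphi_eq]; exact ProbabilityTheory.integrable_gaussianPDFReal 0 1

lemma Phi_def' (x : ℝ) : Phi x = ∫ u in Set.Iic x, gphi u := rfl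

lemma Phi_eq_cdf (x : ℝ) :
    Phi x = ProbabilityTheory.cdf (ProbabilityTheory.gaussianReal 0 1) x := by
  rw [ProbabilityTheory.cdf_eq_real, MeasureTheory.measureReal_def,
    ProbabilityTheory.gaussianReal_apply_eq_integral 0 one_ne_zero, ENNReal.toReal_ofReal,
    ← gphi_eq]
  · rfl
  · apply MeasureTheory.integral_nonneg
    intro u; exact ProbabilityTheory.gaussianPDFReal_nonneg 0 1 u

lemma Phi_atBot : Filter.Tendsto Phi Filter.atBot (nhds 0) := by
  have : Phi = fun x => ProbabilityTheory.cdf (ProbabilityTheory.gaussianReal 0 1) x :=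
    funext Phi_eq_cdf
  rw [this]; exact ProbabilityTheory.tendsto_cdf_atBot _

lemma Phi_atTop : Filter.Tendsto Phi Filter.atTop (nhds 1) := by
  have : Phi = fun x => ProbabilityTheory.cdf (ProbabilityTheory.gaussianReal 0 1) x :=
    funext Phi_eq_cdf
  rw [this]; exact ProbabilityTheory.tendsto_cdf_atTop _

lemma Phi_hasDeriv (x : ℝ) : HasDerivAt Phi (gphi x) x := by
  have h : Phi = fun y => Phi 0 + ∫ u in (0:ℝ)..y, gphi u := by
    funext y
    rw [← intervalIntegral.integral_Iic_sub_Iic gphi_integrable.integrableOn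
      gphi_integrable.integrableOn]
    rw [Phi_def', Phi_def']; ring
  rw [h]
  have := intervalIntegral.integral_hasDerivAt_right (a := 0) (b := x) (f := gphi)
    (gphi_cont.intervalIntegrable _ _)
    gphi_cont.stronglyMeasurable.stronglyMeasurableAtFilter gphi_cont.continuousAt
  exact this.const_add _

lemma Phi_cont : Continuous Phi :=
  continuous_iff_continuousAt.2 fun u => (Phi_hasDeriv u).continuousAt

lemma Phi_strictMono : StrictMono Phi := by
  apply strictMono_of_deriv_pos
  intro x; rw [(Phi_hasDeriv x).deriv]; exact gphi_pos x

lemma Phi_lt_one (x : ℝ) : Phi x < 1 :=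
  lt_of_lt_of_le (Phi_strictMono (lt_add_one x))
    (Phi_strictMono.monotone.ge_of_tendsto Phi_atTop _)

lemma Phi_pos (x : ℝ) : 0 < Phi x :=
  lt_of_le_of_lt (Phi_strictMono.monotone.le_of_tendsto Phi_atBot (x - 1))
    (Phi_strictMono (sub_one_lt x))

lemma Phi_surj (a : ℝ) (h0 : 0 < a) (h1 : a < 1) : ∃ u, Phi u = a := by
  obtain ⟨x, hx⟩ := (Phi_atBot.eventually (gt_mem_nhds h0)).exists
  obtain ⟨y, hy⟩ := (Phi_atTop.eventually (lt_mem_nhds h1)).exists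
  exact mem_range_of_exists_le_of_exists_ge Phi_cont ⟨x, hx.le⟩ ⟨y, hy.le⟩

lemma Phi_neg_add (x : ℝ) : Phi x + Phi (-x) = 1 := by
  have hd : ∀ x, HasDerivAt (fun x => Phi x + Phi (-x)) 0 x := by
    intro x
    have h2 : HasDerivAt (fun x => Phi (-x)) (gphi (-x) * (-1)) x :=
      (Phi_hasDeriv (-x)).comp x (hasDerivAt_neg x)
    refine ((Phi_hasDeriv x).add h2).congr_deriv ?_
    simp [gphi]
  have hc := is_const_of_deriv_eq_zero (fun x => (hd x).differentiableAt) (fun x => (hd x).deriv)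
  have ht : Filter.Tendsto (fun x => Phi x + Phi (-x)) Filter.atTop (nhds (1 + 0)) :=
    Phi_atTop.add (Phi_atBot.comp Filter.tendsto_neg_atTop_atBot)
  have : (fun y => Phi y + Phi (-y)) = fun _ => Phi x + Phi (-x) := funext fun y => hc y x
  rw [this] at ht
  have := tendsto_nhds_unique ht tendsto_const_nhds
  linarith

lemma Phi_zero : Phi 0 = 1 / 2 := by
  have := Phi_neg_add 0
  rw [neg_zero] at this; linarith

lemma gphi_atTop : Filter.Tendsto gphi Filter.atTop (nhds 0) := by
  have h : Filter.Tendsto (fun u : ℝ => -u ^ 2 / 2) Filter.atTop Filter.atBot := by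
    have := (Filter.tendsto_pow_atTop (α := ℝ) (n := 2) two_ne_zero).const_mul_atTop_of_neg
      (r := -1/2) (by norm_num)
    refine this.congr ?_
    intro x; ring
  have := (Real.tendsto_exp_atBot.comp h).div_const (Real.sqrt (2 * Real.pi))
  rw [zero_div] at this
  exact this

lemma gphi_atBot : Filter.Tendsto gphi Filter.atBot (nhds 0) := by
  have := gphi_atTop.comp Filter.tendsto_neg_atBot_atTop
  refine this.congr ?_
  intro x; simp [gphi]

lemma gphi_anti {v z : ℝ} (hv : 0 ≤ v) (hz : v ≤ z) : gphi z ≤ gphi v := by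
  unfold gphi
  gcongr

/-- nonnegativity of the second antiderivative -/
lemma psi_nonneg {v s : ℝ} (h : v ≤ s) :
    0 ≤ s * (Phi s - Phi v) + gphi s - gphi v := by
  have hd : ∀ s, HasDerivAt (fun s => s * (Phi s - Phi v) + gphi s - gphi v)
      (Phi s - Phi v) s := by
    intro s
    have := (((hasDerivAt_id s).mul ((Phi_hasDeriv s).sub_const (Phi v))).add
      (gphi_hasDeriv s)).sub_const (gphi v)
    refine this.congr_deriv ?_
    simp
  have hm : MonotoneOn (fun s => s * (Phi s - Phi v) + gphi s - gphi v) (Set.Ici v) := by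
    apply monotoneOn_of_deriv_nonneg (convex_Ici v)
    · exact fun x _ => (hd x).continuousAt.continuousWithinAt
    · exact fun x _ => (hd x).differentiableAt.differentiableWithinAt
    · intro x hx
      rw [interior_Ici] at hx
      rw [(hd x).deriv]
      have := Phi_strictMono.monotone (le_of_lt hx)
      linarith
  have := hm (Set.mem_Ici.2 le_rfl) (Set.mem_Ici.2 h) h
  simpa using this

lemma ratio_mono {v s u : ℝ} (h : v ≤ s) (h' : s ≤ u) :
    (Phi s - Phi v) * gphi u ≤ (Phi u - Phi v) * gphi s := by
  have hd : ∀ s, HasDerivAt (fun s => (Phi s - Phi v) / gphi s)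
      ((gphi s * gphi s - (Phi s - Phi v) * (-s * gphi s)) / gphi s ^ 2) s := by
    intro s
    exact ((Phi_hasDeriv s).sub_const (Phi v)).div (gphi_hasDeriv s) (gphi_pos s).ne'
  have hm : MonotoneOn (fun s => (Phi s - Phi v) / gphi s) (Set.Ici v) := by
    apply monotoneOn_of_deriv_nonneg (convex_Ici v)
    · exact fun x _ => (hd x).continuousAt.continuousWithinAt
    · exact fun x _ => (hd x).differentiableAt.differentiableWithinAt
    · intro x hx
      rw [interior_Ici] at hx
      rw [(hd x).deriv]
      apply div_nonneg _ (sq_nonneg _)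
      have h1 := psi_nonneg (le_of_lt hx)
      have h2 := gphi_pos v
      have h3 := gphi_pos x
      have : gphi x * gphi x - (Phi x - Phi v) * (-x * gphi x) =
        gphi x * (x * (Phi x - Phi v) + gphi x) := by ring
      rw [this]
      apply mul_nonneg h3.le; linarith
  have := hm (Set.mem_Ici.2 h) (Set.mem_Ici.2 (h.trans h')) h'
  simp only at this
  rwa [div_le_div_iff₀ (gphi_pos _) (gphi_pos _)] at this

lemma lemA_int {v u : ℝ} (h : v ≤ u) :
    gphi u * (u * (Phi u - Phi v) + gphi u - gphi v) ≤ (Phi u - Phi v) ^ 2 := by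
  have hd : ∀ s, HasDerivAt (fun s => (Phi s - Phi v) * (Phi u - Phi v) -
      gphi u * (s * (Phi s - Phi v) + gphi s - gphi v))
      (gphi s * (Phi u - Phi v) - gphi u * (Phi s - Phi v)) s := by
    intro s
    have h1 := (((hasDerivAt_id s).mul ((Phi_hasDeriv s).sub_const (Phi v))).add
      (gphi_hasDeriv s)).sub_const (gphi v)
    have := (((Phi_hasDeriv s).sub_const (Phi v)).mul_const (Phi u - Phi v)).sub
      (h1.const_mul (gphi u))
    refine this.congr_deriv ?_
    simp
  have hm : MonotoneOn (fun s => (Phi s - Phi v) * (Phi u - Phi v) -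
      gphi u * (s * (Phi s - Phi v) + gphi s - gphi v)) (Set.Icc v u) := by
    apply monotoneOn_of_deriv_nonneg (convex_Icc v u)
    · exact fun x _ => (hd x).continuousAt.continuousWithinAt
    · exact fun x _ => (hd x).differentiableAt.differentiableWithinAt
    · intro x hx
      rw [interior_Icc] at hx
      rw [(hd x).deriv]
      have := ratio_mono hx.1.le hx.2.le
      linarith
  have := hm (Set.left_mem_Icc.2 h) (Set.right_mem_Icc.2 h) h
  simp only [sub_self, zero_mul, mul_zero, zero_add] at this
  linarith

/-- `α` is the Gaussian isoperimetric profile at `a`. -/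
def IsI (a α : ℝ) : Prop := (∃ u, Phi u = a ∧ gphi u = α) ∨ (a = 0 ∧ α = 0) ∨ (a = 1 ∧ α = 0)

lemma IsI_exists (a : ℝ) (h0 : 0 ≤ a) (h1 : a ≤ 1) : ∃ α, IsI a α := by
  rcases h0.eq_or_lt with h | h
  · exact ⟨0, Or.inr (Or.inl ⟨h.symm, rfl⟩)⟩
  rcases h1.eq_or_lt with h' | h'
  · exact ⟨0, Or.inr (Or.inr ⟨h', rfl⟩)⟩
  obtain ⟨u, hu⟩ := Phi_surj a h h'
  exact ⟨_, Or.inl ⟨u, hu, rfl⟩⟩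

lemma IsI_nonneg {a α : ℝ} (h : IsI a α) : 0 ≤ α := by
  rcases h with ⟨u, -, rfl⟩ | ⟨-, rfl⟩ | ⟨-, rfl⟩
  · exact (gphi_pos u).le
  · exact le_rfl
  · exact le_rfl

lemma IsI_Phi {w α : ℝ} (h : IsI (Phi w) α) : α = gphi w := by
  rcases h with ⟨u, h, rfl⟩ | ⟨h, -⟩ | ⟨h, -⟩
  · rw [Phi_strictMono.injective h]
  · exact absurd h (Phi_pos w).ne'
  · exact absurd h (Phi_lt_one w).ne

lemma lemA {a α u : ℝ} (h : IsI a α) (hu : a < Phi u) :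
    gphi u * (u * (Phi u - a) + gphi u - α) ≤ (Phi u - a) ^ 2 ∧
    0 ≤ u * (Phi u - a) + gphi u - α := by
  rcases h with ⟨v, rfl, rfl⟩ | ⟨rfl, rfl⟩ | ⟨rfl, -⟩
  · have := (Phi_strictMono.lt_iff_lt.1 hu).le
    exact ⟨lemA_int this, psi_nonneg this⟩
  · have t1 : Filter.Tendsto (fun v => u * (Phi u - Phi v) + gphi u - gphi v) Filter.atBot
        (nhds (u * (Phi u - 0) + gphi u - 0)) :=
      ((((tendsto_const_nhds (x := Phi u)).sub Phi_atBot).const_mul u).add_const _).sub gphi_atBot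
    have t2 : Filter.Tendsto (fun v => (Phi u - Phi v) ^ 2) Filter.atBot
        (nhds ((Phi u - 0) ^ 2)) :=
      ((tendsto_const_nhds (x := Phi u)).sub Phi_atBot).pow 2
    constructor
    · refine le_of_tendsto_of_tendsto (t1.const_mul (gphi u)) t2 ?_
      filter_upwards [Filter.eventually_le_atBot u] with v hv using lemA_int hv
    · refine ge_of_tendsto t1 ?_
      filter_upwards [Filter.eventually_le_atBot u] with v hv using psi_nonneg hv
  · exact absurd hu (Phi_lt_one u).le.not_gt
def KK (a α d u : ℝ) : ℝ := α + d * ((gphi u - α) / (Phi u - a))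

def GG (a α d u : ℝ) : ℝ := KK a α d u ^ 2 + 2 * d ^ 2 * Real.log (Phi u - a)

lemma KK_deriv {a α d u : ℝ} (hu : a < Phi u) :
    HasDerivAt (KK a α d) (-(d * gphi u * (u * (Phi u - a) + gphi u - α) / (Phi u - a) ^ 2)) u := by
  have h := (((gphi_hasDeriv u).sub_const α).div ((Phi_hasDeriv u).sub_const a)
    (sub_pos.2 hu).ne').const_mul d |>.const_add α
  refine h.congr_deriv ?_
  ring

lemma GG_deriv {a α d u : ℝ} (hu : a < Phi u) :
    HasDerivAt (GG a α d) (2 * KK a α d u *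
      (-(d * gphi u * (u * (Phi u - a) + gphi u - α) / (Phi u - a) ^ 2)) +
      2 * d ^ 2 * (gphi u / (Phi u - a))) u := by
  have h := ((KK_deriv (α := α) (d := d) hu).pow 2).add
    ((((Phi_hasDeriv u).sub_const a).log (sub_pos.2 hu).ne').const_mul (2 * d ^ 2))
  refine h.congr_deriv ?_
  simp

lemma KK_anti {a α d w : ℝ} (h : IsI a α) (hd : 0 ≤ d) (hw : a < Phi w) :
    AntitoneOn (KK a α d) (Set.Ici w) := by
  have key : ∀ x ∈ Set.Ici w, a < Phi x := fun x hx =>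
    hw.trans_le (Phi_strictMono.monotone hx)
  apply antitoneOn_of_deriv_nonpos (convex_Ici w)
  · exact fun x hx => (KK_deriv (key x hx)).continuousAt.continuousWithinAt
  · exact fun x hx => (KK_deriv (key x (interior_subset hx))).differentiableAt.differentiableWithinAt
  · intro x hx
    have hx' := key x (interior_subset hx)
    rw [(KK_deriv hx').deriv]
    have h1 := (lemA h hx').2
    have h2 := gphi_pos x
    have : 0 ≤ d * gphi x * (x * (Phi x - a) + gphi x - α) / (Phi x - a) ^ 2 := by positivity
    linarith

lemma GG_mono {a α b w z : ℝ} (h : IsI a α) (hw : a < Phi w) (hwz : w ≤ z) (hz : Phi z ≤ b)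
    (hK : 0 ≤ KK a α (b - a) z) : GG a α (b - a) w ≤ GG a α (b - a) z := by
  have key : ∀ x ∈ Set.Icc w z, a < Phi x := fun x hx =>
    hw.trans_le (Phi_strictMono.monotone hx.1)
  have hab : 0 < b - a := by
    have := key z (Set.right_mem_Icc.2 hwz); linarith
  have hm : MonotoneOn (GG a α (b - a)) (Set.Icc w z) := by
    apply monotoneOn_of_deriv_nonneg (convex_Icc w z)
    · exact fun x hx => (GG_deriv (key x hx)).continuousAt.continuousWithinAt
    · exact fun x hx =>
        (GG_deriv (key x (interior_subset hx))).differentiableAt.differentiableWithinAt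
    · intro x hx
      have hxI := interior_subset hx
      have hx' := key x hxI
      rw [(GG_deriv hx').deriv]
      have hKx : 0 ≤ KK a α (b - a) x :=
        hK.trans (KK_anti h hab.le hw (Set.mem_Ici.2 hxI.1) (Set.mem_Ici.2 hwz) hxI.2)
      obtain ⟨h1, h2⟩ := lemA h hx'
      have hxb : Phi x ≤ b := (Phi_strictMono.monotone hxI.2).trans hz
      have hα := IsI_nonneg h
      have hg := gphi_pos x
      have hD : 0 < Phi x - a := sub_pos.2 hx'
      set D := Phi x - a with hDdef
      set Ψ := x * D + gphi x - α with hΨ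
      set d := b - a with hddef
      have hDd : D ≤ d := by rw [hDdef, hddef]; linarith
      have hKle : KK a α d x * D ≤ d * gphi x := by
        have : KK a α d x * D = α * D + d * (gphi x - α) := by
          unfold KK
          rw [← hDdef]
          field_simp
        rw [this]
        nlinarith [mul_nonneg hα (sub_nonneg.2 hDd)]
      have hmain : KK a α d x * Ψ ≤ d * D := by
        have e1 : KK a α d x * D * Ψ ≤ d * gphi x * Ψ := mul_le_mul_of_nonneg_right hKle h2
        have e2 : d * (gphi x * Ψ) ≤ d * D ^ 2 := mul_le_mul_of_nonneg_left h1 hab.le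
        have e3 : D * (KK a α d x * Ψ) ≤ D * (d * D) := by nlinarith
        exact le_of_mul_le_mul_left e3 hD
      have : 2 * KK a α d x * (-(d * gphi x * Ψ / D ^ 2)) + 2 * d ^ 2 * (gphi x / D) =
          2 * d * gphi x / D ^ 2 * (d * D - KK a α d x * Ψ) := by
        field_simp
        ring
      rw [this]
      apply mul_nonneg
      · positivity
      · linarith
  exact hm (Set.left_mem_Icc.2 hwz) (Set.right_mem_Icc.2 hwz) hwz

lemma IsI_range {a α : ℝ} (h : IsI a α) : 0 ≤ a ∧ a ≤ 1 := by
  rcases h with ⟨u, rfl, -⟩ | ⟨rfl, -⟩ | ⟨rfl, -⟩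
  · exact ⟨(Phi_pos u).le, (Phi_lt_one u).le⟩
  · norm_num
  · norm_num

lemma GG_le {a α b β w : ℝ} (h : IsI a α) (h' : IsI b β) (hw : a < Phi w) (hwb : Phi w < b) :
    GG a α (b - a) w ≤ β ^ 2 + 2 * (b - a) ^ 2 * Real.log (b - a) := by
  have hab : 0 < b - a := by linarith
  rcases h' with ⟨z, rfl, rfl⟩ | ⟨rfl, -⟩ | ⟨rfl, rfl⟩
  · have hK : KK a α (Phi z - a) z = gphi z := by
      unfold KK; field_simp; ring
    have := GG_mono h hw (Phi_strictMono.lt_iff_lt.1 hwb).le le_rfl (by rw [hK]; exact (gphi_pos z).le)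
    refine this.trans (le_of_eq ?_)
    unfold GG
    rw [hK]
  · have := Phi_pos w; linarith
  · have tK : Filter.Tendsto (KK a α (1 - a)) Filter.atTop (nhds 0) := by
      have : Filter.Tendsto (KK a α (1 - a)) Filter.atTop
          (nhds (α + (1 - a) * ((0 - α) / (1 - a)))) :=
        (((gphi_atTop.sub_const α).div (Phi_atTop.sub_const a) hab.ne').const_mul _).const_add _
      convert this using 2
      field_simp; ring
    have tG : Filter.Tendsto (GG a α (1 - a)) Filter.atTop
        (nhds (0 ^ 2 + 2 * (1 - a) ^ 2 * Real.log (1 - a))) :=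
      (tK.pow 2).add (((Phi_atTop.sub_const a).log hab.ne').const_mul _)
    have hK : ∀ z, w ≤ z → 0 ≤ KK a α (1 - a) z := by
      intro z hz
      refine le_of_tendsto tK ?_
      filter_upwards [Filter.eventually_ge_atTop z] with y hy
      exact KK_anti h hab.le hw (Set.mem_Ici.2 hz) (Set.mem_Ici.2 (hz.trans hy)) hy
    refine ge_of_tendsto tG ?_
    filter_upwards [Filter.eventually_ge_atTop w] with y hy
    exact GG_mono h hw hy (Phi_lt_one y).le (hK y hy)

lemma two_point {a α b β μ p c : ℝ} {m : ℝ} (hp0 : 0 < p) (hp1 : p < 1) (hc : -(2 * Real.log p) ≤ c ^ 2)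
    (h : IsI a α) (h' : IsI b β) (hab : a ≤ b) (hm : m = p * b + (1 - p) * a) (h'' : IsI m μ) :
    μ ≤ p * Real.sqrt (β ^ 2 + c ^ 2 * (b - a) ^ 2) + (1 - p) * α := by
  have hα := IsI_nonneg h
  have hβ := IsI_nonneg h'
  have hR : 0 ≤ p * Real.sqrt (β ^ 2 + c ^ 2 * (b - a) ^ 2) + (1 - p) * α := by
    have := Real.sqrt_nonneg (β ^ 2 + c ^ 2 * (b - a) ^ 2)
    have : 0 ≤ 1 - p := by linarith
    positivity
  rcases h'' with ⟨w, hw, rfl⟩ | ⟨-, rfl⟩ | ⟨-, rfl⟩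
  · rcases hab.eq_or_lt with rfl | hlt
    · have e : a = Phi w := by rw [hw, hm]; ring
      subst e
      rw [IsI_Phi h, IsI_Phi h']
      rw [sub_self, zero_pow two_ne_zero, mul_zero, add_zero, Real.sqrt_sq (gphi_pos w).le]
      linarith
    · have h1 : a < Phi w := by rw [hw, hm]; nlinarith
      have h2 : Phi w < b := by rw [hw, hm]; nlinarith
      have hG := GG_le h h' h1 h2
      have hd : 0 < b - a := by linarith
      have e : Phi w - a = p * (b - a) := by rw [hw, hm]; ring
      unfold GG at hG
      rw [e, Real.log_mul hp0.ne' hd.ne'] at hG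
      have hK : KK a α (b - a) w = α + (gphi w - α) / p := by
        unfold KK; rw [e]; field_simp
      have hsq : KK a α (b - a) w ^ 2 ≤ β ^ 2 + c ^ 2 * (b - a) ^ 2 := by
        nlinarith [mul_le_mul_of_nonneg_right hc (sq_nonneg (b - a))]
      have := Real.le_sqrt_of_sq_le hsq
      have e2 : gphi w = p * KK a α (b - a) w + (1 - p) * α := by
        rw [hK]; field_simp; ring
      rw [e2]
      have := mul_le_mul_of_nonneg_left this hp0.le
      linarith
  · exact hR
  · exact hR
def wt {n : ℕ} (ε : ℝ) (ω : Pattern n) : ℝ := ∏ i, if ω i = 0 then 1 - ε else ε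

def EE {n : ℕ} (ε : ℝ) (f : Pattern n → ℝ) : ℝ := ∑ ω : Pattern n, wt ε ω * f ω

def Ind {n : ℕ} (S : Pattern n → Prop) (ω : Pattern n) : ℝ := if S ω then 1 else 0

/-- number of pivotal coordinates -/
def hh {n : ℕ} (S : Pattern n → Prop) (ω : Pattern n) : ℝ :=
  ∑ i, if (S ω ∧ ω i ≠ 0 ∧ ¬ S (Function.update ω i 0)) then (1 : ℝ) else 0

def Mono {n : ℕ} (S : Pattern n → Prop) : Prop := ∀ ω ω', covers ω' ω → S ω → S ω'

def sec {n : ℕ} (S : Pattern (n + 1) → Prop) (b : ZMod 2) (x : Pattern n) : Prop :=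
  S (Fin.cons b x : Fin (n + 1) → ZMod 2)

lemma Mono_sec {n : ℕ} {S : Pattern (n + 1) → Prop} (h : Mono S) (b : ZMod 2) : Mono (sec S b) := by
  intro ω ω' hc hs
  refine h _ _ ?_ hs
  intro i
  refine Fin.cases ?_ (fun j => ?_) i
  · simp
  · simpa using hc j

lemma sec_le {n : ℕ} {S : Pattern (n + 1) → Prop} (h : Mono S) (x : Pattern n) :
    sec S 0 x → sec S 1 x := by
  intro hs
  refine h _ _ ?_ hs
  intro i
  refine Fin.cases ?_ (fun j => ?_) i
  · simp
  · simp

lemma EE_succ {n : ℕ} (ε : ℝ) (f : Pattern (n + 1) → ℝ) :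
    EE ε f = ε * EE ε (fun x : Pattern n => f (Fin.cons 1 x : Fin (n + 1) → ZMod 2)) +
      (1 - ε) * EE ε (fun x : Pattern n => f (Fin.cons 0 x : Fin (n + 1) → ZMod 2)) := by
  unfold EE
  rw [← (Fin.consEquiv (fun _ : Fin (n + 1) => ZMod 2)).sum_comp, Fintype.sum_prod_type]
  have : ∀ g : ZMod 2 → ℝ, ∑ x, g x = g 1 + g 0 := by
    intro g
    rw [add_comm]
    exact Fin.sum_univ_two g
  rw [this, Finset.mul_sum, Finset.mul_sum]
  congr 1
  · apply Finset.sum_congr rfl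
    intro x _
    change wt ε (Fin.cons 1 x : Fin (n + 1) → ZMod 2) * f (Fin.cons 1 x) = _
    simp only [wt, Fin.prod_univ_succ, Fin.cons_zero, Fin.cons_succ]
    simp
    ring
  · apply Finset.sum_congr rfl
    intro x _
    change wt ε (Fin.cons 0 x : Fin (n + 1) → ZMod 2) * f (Fin.cons 0 x) = _
    simp only [wt, Fin.prod_univ_succ, Fin.cons_zero, Fin.cons_succ]
    simp
    ring

lemma wt_nonneg {n : ℕ} {ε : ℝ} (h0 : 0 ≤ ε) (h1 : ε ≤ 1) (ω : Pattern n) : 0 ≤ wt ε ω := by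
  unfold wt
  apply Finset.prod_nonneg
  intro i _
  split_ifs <;> linarith

lemma EE_mono {n : ℕ} {ε : ℝ} (h0 : 0 ≤ ε) (h1 : ε ≤ 1) {f g : Pattern n → ℝ}
    (h : ∀ ω, f ω ≤ g ω) : EE ε f ≤ EE ε g := by
  unfold EE
  exact Finset.sum_le_sum fun ω _ => mul_le_mul_of_nonneg_left (h ω) (wt_nonneg h0 h1 ω)

lemma EE_add {n : ℕ} (ε : ℝ) (f g : Pattern n → ℝ) :
    EE ε (fun x => f x + g x) = EE ε f + EE ε g := by
  unfold EE
  rw [← Finset.sum_add_distrib]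
  exact Finset.sum_congr rfl fun _ _ => by ring

lemma EE_sub {n : ℕ} (ε : ℝ) (f g : Pattern n → ℝ) :
    EE ε (fun x => f x - g x) = EE ε f - EE ε g := by
  unfold EE
  rw [← Finset.sum_sub_distrib]
  exact Finset.sum_congr rfl fun _ _ => by ring

lemma EE_smul {n : ℕ} (ε c : ℝ) (f : Pattern n → ℝ) :
    EE ε (fun x => c * f x) = c * EE ε f := by
  unfold EE
  rw [Finset.mul_sum]
  exact Finset.sum_congr rfl fun _ _ => by ring

lemma EE_one {n : ℕ} (ε : ℝ) : EE ε (fun _ : Pattern n => (1 : ℝ)) = 1 := by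
  induction n with
  | zero => simp [EE, wt]
  | succ n ih => rw [EE_succ, ih]; ring

lemma EE_nonneg {n : ℕ} {ε : ℝ} (h0 : 0 ≤ ε) (h1 : ε ≤ 1) {f : Pattern n → ℝ}
    (h : ∀ ω, 0 ≤ f ω) : 0 ≤ EE ε f :=
  Finset.sum_nonneg fun ω _ => mul_nonneg (wt_nonneg h0 h1 ω) (h ω)

lemma Ind_nonneg {n : ℕ} (S : Pattern n → Prop) (ω : Pattern n) : 0 ≤ Ind S ω := by
  unfold Ind; split_ifs <;> norm_num

lemma Ind_le_one {n : ℕ} (S : Pattern n → Prop) (ω : Pattern n) : Ind S ω ≤ 1 := by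
  unfold Ind; split_ifs <;> norm_num

lemma hh_nonneg {n : ℕ} (S : Pattern n → Prop) (ω : Pattern n) : 0 ≤ hh S ω := by
  unfold hh
  apply Finset.sum_nonneg
  intro i _
  split_ifs <;> norm_num

lemma hh_cons_zero {n : ℕ} (S : Pattern (n + 1) → Prop) (x : Pattern n) :
    hh S (Fin.cons 0 x : Fin (n + 1) → ZMod 2) = hh (sec S 0) x := by
  unfold hh
  rw [Fin.sum_univ_succ]
  simp only [Fin.cons_zero, Fin.cons_succ, ← Fin.cons_update, sec]
  simp

lemma hh_cons_one {n : ℕ} {S : Pattern (n + 1) → Prop} (h : Mono S) (x : Pattern n) :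
    hh S (Fin.cons 1 x : Fin (n + 1) → ZMod 2) =
      hh (sec S 1) x + (Ind (sec S 1) x - Ind (sec S 0) x) := by
  unfold hh
  rw [Fin.sum_univ_succ]
  simp only [Fin.cons_zero, Fin.cons_succ, ← Fin.cons_update, Fin.update_cons_zero]
  rw [add_comm]
  congr 1
  have := sec_le h x
  unfold Ind
  unfold sec at *
  by_cases h1 : S (Fin.cons 1 x : Fin (n + 1) → ZMod 2) <;>
    by_cases h0 : S (Fin.cons 0 x : Fin (n + 1) → ZMod 2) <;> simp_all

lemma EE_Ind_range {n : ℕ} {ε : ℝ} (h0 : 0 ≤ ε) (h1 : ε ≤ 1) (S : Pattern n → Prop) :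
    0 ≤ EE ε (Ind S) ∧ EE ε (Ind S) ≤ 1 := by
  refine ⟨EE_nonneg h0 h1 (Ind_nonneg S), ?_⟩
  rw [← EE_one (n := n) ε]
  exact EE_mono h0 h1 (Ind_le_one S)

lemma EE_Ind_succ {n : ℕ} (ε : ℝ) (S : Pattern (n + 1) → Prop) :
    EE ε (Ind S) = ε * EE ε (Ind (sec S 1)) + (1 - ε) * EE ε (Ind (sec S 0)) := by
  rw [EE_succ]; rfl

/-- Minkowski / Jensen for the Euclidean norm. -/
lemma EE_sqrt {n : ℕ} {ε : ℝ} (h0 : 0 ≤ ε) (h1 : ε ≤ 1) (u v : Pattern n → ℝ) :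
    Real.sqrt (EE ε u ^ 2 + EE ε v ^ 2) ≤ EE ε (fun x => Real.sqrt (u x ^ 2 + v x ^ 2)) := by
  set A := EE ε u with hA
  set B := EE ε v with hB
  set R := Real.sqrt (A ^ 2 + B ^ 2) with hR
  have hE : 0 ≤ EE ε (fun x => Real.sqrt (u x ^ 2 + v x ^ 2)) :=
    EE_nonneg h0 h1 fun _ => Real.sqrt_nonneg _
  have hRn : 0 ≤ R := Real.sqrt_nonneg _
  have hR2 : R ^ 2 = A ^ 2 + B ^ 2 := Real.sq_sqrt (by positivity)
  rcases hRn.eq_or_lt with h | h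
  · rw [← h]; exact hE
  have key : EE ε (fun x => A * u x + B * v x) ≤
      EE ε (fun x => R * Real.sqrt (u x ^ 2 + v x ^ 2)) := by
    apply EE_mono h0 h1
    intro x
    rw [hR, ← Real.sqrt_mul (by positivity)]
    apply Real.le_sqrt_of_sq_le
    nlinarith [sq_nonneg (A * v x - B * u x)]
  rw [EE_add, EE_smul, EE_smul, EE_smul, ← hA, ← hB] at key
  have : R * R ≤ R * EE ε (fun x => Real.sqrt (u x ^ 2 + v x ^ 2)) := by nlinarith
  exact le_of_mul_le_mul_left this h

theorem isoperim {n : ℕ} {p c : ℝ} (hp0 : 0 < p) (hp1 : p < 1) (hc0 : 0 ≤ c)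
    (hc : -(2 * Real.log p) ≤ c ^ 2) (S : Pattern n → Prop) (hS : Mono S) (α : ℝ)
    (hα : IsI (EE p (Ind S)) α) : α ≤ c * EE p (fun ω => Real.sqrt (hh S ω)) := by
  induction n generalizing α with
  | zero =>
    have hn : 0 ≤ c * EE p (fun ω => Real.sqrt (hh S ω)) :=
      mul_nonneg hc0 (EE_nonneg hp0.le hp1.le fun _ => Real.sqrt_nonneg _)
    rcases hα with ⟨u, hu, rfl⟩ | ⟨-, rfl⟩ | ⟨-, rfl⟩
    · exfalso
      have h0 := Phi_pos u
      have h1 := Phi_lt_one u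
      rw [hu] at h0 h1
      have : EE p (Ind S) = Ind S default := by
        simp [EE, wt]
        congr 1
        exact Subsingleton.elim _ _
      rw [this] at h0 h1
      unfold Ind at h0 h1
      split_ifs at h0 h1 <;> linarith
    · exact hn
    · exact hn
  | succ n ih =>
    set S1 := sec S 1 with hS1
    set S0 := sec S 0 with hS0
    have r1 := EE_Ind_range hp0.le hp1.le S1
    have r0 := EE_Ind_range hp0.le hp1.le S0
    obtain ⟨β, hβ⟩ := IsI_exists _ r1.1 r1.2
    obtain ⟨γ, hγ⟩ := IsI_exists _ r0.1 r0.2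
    have i1 := ih S1 (Mono_sec hS 1) β hβ
    have i0 := ih S0 (Mono_sec hS 0) γ hγ
    have hle : ∀ x, Ind S0 x ≤ Ind S1 x := by
      intro x
      have := sec_le hS x
      unfold Ind
      split_ifs with h1 h2
      · norm_num
      · exact absurd (this h1) h2
      · norm_num
      · norm_num
    have hab := EE_mono hp0.le hp1.le hle
    have tp := two_point hp0 hp1 hc hγ hβ hab (EE_Ind_succ p S) hα
    have hβ0 := IsI_nonneg hβ
    have e1 : EE p (fun ω => Real.sqrt (hh S ω)) =
        p * EE p (fun x => Real.sqrt (Real.sqrt (hh S1 x) ^ 2 + (Ind S1 x - Ind S0 x) ^ 2)) +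
        (1 - p) * EE p (fun x => Real.sqrt (hh S0 x)) := by
      rw [EE_succ]
      congr 3
      · funext x
        rw [hh_cons_one hS, Real.sq_sqrt (hh_nonneg _ _)]
        congr 2
        have := hle x
        simp only [← hS1, ← hS0]
        unfold Ind at *
        split_ifs at * <;> norm_num at *
      · funext x
        rw [hh_cons_zero]
    have mk := EE_sqrt hp0.le hp1.le (fun x => Real.sqrt (hh S1 x)) (fun x => Ind S1 x - Ind S0 x)
    rw [EE_sub] at mk
    set X := EE p (fun x => Real.sqrt (hh S1 x)) with hX
    set d := EE p (Ind S1) - EE p (Ind S0) with hd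
    have q1 : Real.sqrt (β ^ 2 + c ^ 2 * d ^ 2) ≤ c * Real.sqrt (X ^ 2 + d ^ 2) := by
      apply Real.sqrt_le_iff.2
      refine ⟨mul_nonneg hc0 (Real.sqrt_nonneg _), ?_⟩
      rw [mul_pow, Real.sq_sqrt (by positivity)]
      have : β ^ 2 ≤ (c * X) ^ 2 := by gcongr
      nlinarith
    have q2 := q1.trans (mul_le_mul_of_nonneg_left mk hc0)
    have q3 := mul_le_mul_of_nonneg_left q2 hp0.le
    have q4 := mul_le_mul_of_nonneg_left i0 (by linarith : 0 ≤ 1 - p)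
    rw [e1]
    calc α ≤ _ := tp
      _ ≤ _ := add_le_add q3 q4
      _ = _ := by ring

theorem russo {n : ℕ} (S : Pattern n → Prop) (hS : Mono S) (ε : ℝ) (hε : ε ≠ 0) :
    HasDerivAt (fun t => EE t (Ind S)) (EE ε (hh S) / ε) ε := by
  induction n with
  | zero =>
    have h1 : (fun t : ℝ => EE t (Ind S)) = fun _ => Ind S default := by
      funext t
      simp [EE, wt]
      congr 1
      exact Subsingleton.elim _ _
    have h2 : EE ε (hh S) = 0 := by simp [EE, wt, hh]
    rw [h1, h2, zero_div]
    exact hasDerivAt_const _ _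
  | succ n ih =>
    have d1 := ih (sec S 1) (Mono_sec hS 1)
    have d0 := ih (sec S 0) (Mono_sec hS 0)
    have h1 : (fun t : ℝ => EE t (Ind S)) =
        fun t => t * EE t (Ind (sec S 1)) + (1 - t) * EE t (Ind (sec S 0)) := by
      funext t; exact EE_Ind_succ t S
    rw [h1]
    have h2 : EE ε (hh S) = ε * (EE ε (hh (sec S 1)) + (EE ε (Ind (sec S 1)) - EE ε (Ind (sec S 0))))
        + (1 - ε) * EE ε (hh (sec S 0)) := by
      rw [EE_succ]
      simp only [hh_cons_one hS, hh_cons_zero]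
      rw [EE_add, EE_sub]
    have hder := ((hasDerivAt_id ε).mul d1).add (((hasDerivAt_id ε).const_sub 1).mul d0)
    refine hder.congr_deriv ?_
    rw [h2]
    simp only [id]
    field_simp
    ring
/-- The failure predicate of the code. -/
def SC {N : ℕ} (C : Submodule (ZMod 2) (Pattern N)) (ω : Pattern N) : Prop :=
  ∃ x ∈ C, x ≠ 0 ∧ covers ω x

lemma SC_mono {N : ℕ} (C : Submodule (ZMod 2) (Pattern N)) : Mono (SC C) := by
  rintro ω ω' hc ⟨x, hx, h0, hcov⟩
  exact ⟨x, hx, h0, fun i hi => hc i (hcov i hi)⟩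

lemma wt_eq {N : ℕ} (ε : ℝ) (ω : Pattern N) : wt ε ω = ε ^ wH ω * (1 - ε) ^ (N - wH ω) := by
  unfold wt wH hammingNorm
  rw [Finset.prod_ite, Finset.prod_const, Finset.prod_const, mul_comm]
  congr 2
  have := Finset.card_filter_add_card_filter_not (s := (univ : Finset (Fin N))) (fun i => ω i = 0)
  rw [Finset.card_univ, Fintype.card_fin] at this
  simp only [ne_eq]
  omega

lemma Pmap_eq {N : ℕ} (C : Submodule (ZMod 2) (Pattern N)) (ε : ℝ) :
    Pmap C ε = EE ε (Ind (SC C)) := by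
  unfold Pmap muE errBEC EE
  rw [Finset.sum_filter]
  apply Finset.sum_congr rfl
  intro ω _
  rw [wt_eq]
  unfold Ind SC
  split_ifs <;> simp

lemma EE_covers {N : ℕ} (ε : ℝ) (x : Pattern N) :
    EE ε (Ind (fun ω => covers ω x)) = ε ^ wH x := by
  have h1 : ∀ ω : Pattern N, wt ε ω * Ind (fun ω => covers ω x) ω =
      ∏ i, (if ω i = 0 then (if x i = 0 then 1 - ε else 0) else ε) := by
    intro ω
    unfold Ind wt
    by_cases h : covers ω x
    · rw [if_pos h, mul_one]
      apply Finset.prod_congr rfl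
      intro i _
      by_cases hw : ω i = 0
      · have : x i = 0 := by
          by_contra hx
          exact h i hx hw
        simp [hw, this]
      · simp [hw]
    · rw [if_neg h, mul_zero]
      unfold covers at h
      push Not at h
      obtain ⟨i, hi, hi'⟩ := h
      symm
      apply Finset.prod_eq_zero (Finset.mem_univ i)
      simp [hi, hi']
  unfold EE
  rw [Finset.sum_congr rfl fun ω _ => h1 ω]
  have h2 := Finset.prod_univ_sum (fun _ : Fin N => (univ : Finset (ZMod 2)))
    (fun i b => if b = 0 then (if x i = 0 then 1 - ε else 0) else ε)
  rw [Fintype.piFinset_univ] at h2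
  rw [← h2]
  have h3 : ∀ i, ∑ b : ZMod 2, (if b = 0 then (if x i = 0 then 1 - ε else 0) else ε) =
      if x i ≠ 0 then ε else 1 := by
    intro i
    have : ∀ g : ZMod 2 → ℝ, ∑ x, g x = g 0 + g 1 := fun g => Fin.sum_univ_two g
    rw [this]
    by_cases hx : x i = 0 <;> simp [hx]
  rw [Finset.prod_congr rfl fun i _ => h3 i]
  rw [Finset.prod_ite, Finset.prod_const, Finset.prod_const_one, mul_one]
  rfl

lemma hh_pos_exists {N : ℕ} (C : Submodule (ZMod 2) (Pattern N)) (ω : Pattern N)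
    (h : hh (SC C) ω ≠ 0) :
    ∃ x ∈ C, covers ω x ∧ 1 ≤ wH x ∧ hh (SC C) ω = wH x := by
  unfold hh at h
  obtain ⟨i, -, hi⟩ := Finset.exists_ne_zero_of_sum_ne_zero h
  have hi' : SC C ω ∧ ω i ≠ 0 ∧ ¬ SC C (Function.update ω i 0) := by
    by_contra hcon
    exact hi (if_neg hcon)
  obtain ⟨⟨x, hx, hx0, hcx⟩, hωi, hpiv⟩ := hi'
  have piv : ∀ y ∈ C, y ≠ 0 → covers ω y → y i ≠ 0 := by
    intro y hy hy0 hcy hyi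
    apply hpiv
    refine ⟨y, hy, hy0, ?_⟩
    intro j hj
    by_cases hji : j = i
    · subst hji; exact absurd hyi hj
    · rw [Function.update_of_ne hji]; exact hcy j hj
  have two : ∀ a b : ZMod 2, a ≠ 0 → b ≠ 0 → a + b = 0 := by decide
  have uniq : ∀ y ∈ C, y ≠ 0 → covers ω y → y = x := by
    intro y hy hy0 hcy
    by_contra hne
    have hs : x + y ≠ 0 := by
      intro h0
      apply hne
      funext j
      have hj : x j + y j = 0 := congrFun h0 j
      have : ∀ a b : ZMod 2, a + b = 0 → b = a := by decide
      exact this _ _ hj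
    have hcs : covers ω (x + y) := by
      intro j hj
      by_cases hxj : x j = 0
      · apply hcy j
        intro hyj
        apply hj
        simp [hxj, hyj]
      · exact hcx j hxj
    exact piv _ (C.add_mem hx hy) hs hcs
      (two _ _ (piv x hx hx0 hcx) (piv y hy hy0 hcy))
  refine ⟨x, hx, hcx, ?_, ?_⟩
  · unfold wH
    exact hammingNorm_pos_iff.2 hx0
  · unfold hh wH hammingNorm
    rw [Finset.sum_boole]
    congr 2
    ext j
    simp only [Finset.mem_filter, Finset.mem_univ, true_and]
    constructor
    · rintro ⟨-, hj, hn⟩ hxj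
      apply hn
      refine ⟨x, hx, hx0, ?_⟩
      intro k hk
      by_cases hkj : k = j
      · subst hkj; exact absurd hxj hk
      · rw [Function.update_of_ne hkj]; exact hcx k hk
    · intro hj
      refine ⟨⟨x, hx, hx0, hcx⟩, hcx j hj, ?_⟩
      rintro ⟨y, hy, hy0, hcy⟩
      have hcy' : covers ω y := by
        intro k hk
        have := hcy k hk
        by_cases hkj : k = j
        · subst hkj; simp at this
        · rwa [Function.update_of_ne hkj] at this
      have := uniq y hy hy0 hcy'
      subst this
      have := hcy j hj
      simp at this

lemma EE_sum {n : ℕ} {ι : Type*} (s : Finset ι) (ε : ℝ) (f : ι → Pattern n → ℝ) :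
    EE ε (fun x => ∑ i ∈ s, f i x) = ∑ i ∈ s, EE ε (f i) := by
  unfold EE
  rw [Finset.sum_comm]
  exact Finset.sum_congr rfl fun _ _ => by rw [Finset.mul_sum]

lemma E_bound {N : ℕ} (C : Submodule (ZMod 2) (Pattern N)) (W : ℕ) {ε : ℝ} (h0 : 0 ≤ ε)
    (h1 : ε ≤ 1) :
    Real.sqrt W * EE ε (fun ω => Real.sqrt (hh (SC C) ω)) ≤
      EE ε (hh (SC C)) + ∑ w ∈ Finset.Icc 1 W, (Aw C w : ℝ) * (Real.sqrt W * Real.sqrt w * ε ^ w) := by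
  have key : ∀ ω, Real.sqrt W * Real.sqrt (hh (SC C) ω) ≤ hh (SC C) ω +
      ∑ w ∈ Finset.Icc 1 W, ∑ x ∈ univ.filter (fun x : Pattern N => x ∈ C ∧ wH x = w),
        (Real.sqrt W * Real.sqrt w) * Ind (fun ω => covers ω x) ω := by
    intro ω
    have hn := hh_nonneg (SC C) ω
    have hnn : ∀ w ∈ Finset.Icc 1 W, 0 ≤
        ∑ x ∈ univ.filter (fun x : Pattern N => x ∈ C ∧ wH x = w),
        (Real.sqrt W * Real.sqrt w) * Ind (fun ω => covers ω x) ω := fun w _ =>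
      Finset.sum_nonneg fun x _ => mul_nonneg (by positivity) (Ind_nonneg _ _)
    by_cases hz : hh (SC C) ω = 0
    · have := Finset.sum_nonneg hnn
      rw [hz, Real.sqrt_zero, mul_zero, zero_add]
      exact this
    · obtain ⟨x, hx, hcx, hw1, he⟩ := hh_pos_exists C ω hz
      by_cases hW : wH x ≤ W
      · have s1 := Finset.single_le_sum hnn (Finset.mem_Icc.2 ⟨hw1, hW⟩)
        have s2 := Finset.single_le_sum
          (s := univ.filter (fun y : Pattern N => y ∈ C ∧ wH y = wH x))
          (f := fun y => (Real.sqrt W * Real.sqrt (wH x)) * Ind (fun ω => covers ω y) ω)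
          (fun y _ => mul_nonneg (by positivity) (Ind_nonneg _ _))
          (Finset.mem_filter.2 ⟨Finset.mem_univ x, hx, rfl⟩)
        have : Ind (fun ω => covers ω x) ω = 1 := if_pos hcx
        simp only [this, mul_one] at s2
        rw [← he] at s2 s1
        linarith
      · have hWx : (W : ℝ) ≤ hh (SC C) ω := by
          rw [he]; exact_mod_cast (not_le.1 hW).le
        have := Finset.sum_nonneg hnn
        have e1 : Real.sqrt W * Real.sqrt (hh (SC C) ω) ≤ hh (SC C) ω := by
          calc _ ≤ Real.sqrt (hh (SC C) ω) * Real.sqrt (hh (SC C) ω) := by gcongr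
            _ = _ := Real.mul_self_sqrt hn
        linarith
  have := EE_mono h0 h1 key
  rw [EE_smul, EE_add, EE_sum] at this
  refine this.trans (le_of_eq ?_)
  congr 1
  apply Finset.sum_congr rfl
  intro w _
  rw [EE_sum]
  have : ∀ x ∈ univ.filter (fun x : Pattern N => x ∈ C ∧ wH x = w),
      EE ε (fun ω => (Real.sqrt W * Real.sqrt w) * Ind (fun ω => covers ω x) ω) =
      Real.sqrt W * Real.sqrt w * ε ^ w := by
    intro x hx
    rw [EE_smul, EE_covers, (Finset.mem_filter.1 hx).2.2]
  rw [Finset.sum_congr rfl this, Finset.sum_const, nsmul_eq_mul]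
  rfl
lemma barrier {D D' : ℝ → ℝ} {a b : ℝ} (hab : a ≤ b)
    (hD : ∀ x ∈ Set.Icc a b, HasDerivAt D (D' x) x) (ha : 0 ≤ D a)
    (h : ∀ x ∈ Set.Icc a b, D x < 0 → 0 ≤ D' x) : 0 ≤ D b := by
  by_contra hb
  push Not at hb
  have hcont : ContinuousOn D (Set.Icc a b) := fun x hx => (hD x hx).continuousAt.continuousWithinAt
  have hcl : IsClosed (Set.Icc a b ∩ D ⁻¹' Set.Ici 0) :=
    hcont.preimage_isClosed_of_isClosed isClosed_Icc isClosed_Ici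
  have hcomp : IsCompact (Set.Icc a b ∩ D ⁻¹' Set.Ici 0) :=
    isCompact_Icc.of_isClosed_subset hcl Set.inter_subset_left
  obtain ⟨c, hc, hmax⟩ := hcomp.exists_isGreatest ⟨a, Set.left_mem_Icc.2 hab, ha⟩
  have hc0 : 0 ≤ D c := hc.2
  have hsub : Set.Icc c b ⊆ Set.Icc a b := Set.Icc_subset_Icc_left hc.1.1
  have hm : MonotoneOn D (Set.Icc c b) := by
    apply monotoneOn_of_deriv_nonneg (convex_Icc c b)
    · exact hcont.mono hsub
    · exact fun x hx =>
        (hD x (hsub (interior_subset hx))).differentiableAt.differentiableWithinAt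
    · intro x hx
      have hxI := hsub (interior_subset hx)
      rw [interior_Icc] at hx
      rw [(hD x hxI).deriv]
      apply h x hxI
      by_contra hn
      have := hmax ⟨hxI, not_lt.1 hn⟩
      exact absurd hx.1 this.not_gt
  have := hm (Set.left_mem_Icc.2 hc.1.2) (Set.right_mem_Icc.2 hc.1.2) hc.1.2
  linarith

lemma loss_bound {s t : ℝ} {w : ℕ} (hs : 0 < s) (hst : s < t) (ht : t < 1) :
    t ^ w - s ^ w ≤ 2 * Real.sqrt (-Real.log s) * Real.sqrt w * t ^ w := by
  have hL : 0 < -Real.log s := by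
    have := Real.log_neg hs (hst.trans ht); linarith
  set τ := Real.sqrt (-Real.log s) * Real.sqrt w with hτ
  have hτ0 : 0 ≤ τ := by positivity
  have ht0 : 0 < t := hs.trans hst
  have hτ2 : τ ^ 2 = -(w * Real.log s) := by
    rw [hτ, mul_pow, Real.sq_sqrt hL.le, Real.sq_sqrt (Nat.cast_nonneg w)]; ring
  have h1 : 1 - τ ^ 2 ≤ s ^ w := by
    have := Real.add_one_le_exp (-(τ ^ 2))
    have e : Real.exp (-(τ ^ 2)) = s ^ w := by
      rw [hτ2, neg_neg, Real.exp_nat_mul, Real.exp_log hs]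
    linarith
  have h2 : 1 - τ ≤ s ^ w := by
    by_cases hle : τ ≤ 1
    · nlinarith
    · have : 0 < s ^ w := by positivity
      linarith
  have h3 : s ^ w * t ^ w ≤ s ^ w := by
    have : t ^ w ≤ 1 := pow_le_one₀ ht0.le ht.le
    have : 0 < s ^ w := by positivity
    nlinarith
  have h4 : 0 < t ^ w := by positivity
  have : 2 * Real.sqrt (-Real.log s) * Real.sqrt w * t ^ w = 2 * τ * t ^ w := by rw [hτ]; ring
  rw [this]
  nlinarith [mul_le_mul_of_nonneg_right h2 h4.le, mul_nonneg hτ0 h4.le]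

def Lam {N : ℕ} (C : Submodule (ZMod 2) (Pattern N)) (W : ℕ) (s t : ℝ) : ℝ :=
  ∑ w ∈ Finset.Icc 1 W, (Aw C w : ℝ) * (Real.sqrt W / Real.sqrt w * (t ^ w - s ^ w))

lemma Lam_deriv {N : ℕ} (C : Submodule (ZMod 2) (Pattern N)) (W : ℕ) (s t : ℝ) (ht : t ≠ 0) :
    HasDerivAt (Lam C W s)
      ((∑ w ∈ Finset.Icc 1 W, (Aw C w : ℝ) * (Real.sqrt W * Real.sqrt w * t ^ w)) / t) t := by
  unfold Lam
  rw [Finset.sum_div]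
  apply HasDerivAt.fun_sum
  intro w hw
  have hw1 : 1 ≤ w := (Finset.mem_Icc.1 hw).1
  have := ((((hasDerivAt_pow w t).sub_const (s ^ w)).const_mul
    (Real.sqrt W / Real.sqrt w)).const_mul (Aw C w : ℝ))
  refine this.congr_deriv ?_
  have hp : t ^ w = t ^ (w - 1) * t := by
    rw [← pow_succ]; congr 1; omega
  have hwpos : (0 : ℝ) < w := by exact_mod_cast hw1
  have hq : (w : ℝ) = Real.sqrt w * Real.sqrt w := (Real.mul_self_sqrt hwpos.le).symm
  have hsq : Real.sqrt w ≠ 0 := (Real.sqrt_pos.2 hwpos).ne'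
  rw [hp]
  generalize Real.sqrt (w : ℝ) = r at *
  rw [hq]
  field_simp

lemma Lam_le {N : ℕ} (C : Submodule (ZMod 2) (Pattern N)) (W : ℕ) {s t : ℝ} (hs : 0 < s)
    (hst : s < t) (ht : t < 1) :
    Lam C W s t ≤ 2 * Real.sqrt (-Real.log s) * Real.sqrt W * AW C W t := by
  unfold Lam AW
  rw [Finset.mul_sum]
  apply Finset.sum_le_sum
  intro w hw
  have hw1 : 1 ≤ w := (Finset.mem_Icc.1 hw).1
  have hwpos : (0 : ℝ) < w := by exact_mod_cast hw1
  have hsq : 0 < Real.sqrt w := (Real.sqrt_pos.2 hwpos)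
  have h := loss_bound (w := w) hs hst ht
  have h1 : Real.sqrt W / Real.sqrt w * (t ^ w - s ^ w) ≤
      Real.sqrt W / Real.sqrt w * (2 * Real.sqrt (-Real.log s) * Real.sqrt w * t ^ w) :=
    mul_le_mul_of_nonneg_left h (by positivity)
  have h2 := mul_le_mul_of_nonneg_left h1 (Nat.cast_nonneg (α := ℝ) (Aw C w))
  refine h2.trans (le_of_eq ?_)
  field_simp

lemma Lam_nonneg {N : ℕ} (C : Submodule (ZMod 2) (Pattern N)) (W : ℕ) {s t : ℝ} (hs : 0 < s)
    (hst : s ≤ t) : 0 ≤ Lam C W s t := by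
  unfold Lam
  apply Finset.sum_nonneg
  intro w _
  have : s ^ w ≤ t ^ w := by gcongr
  have : 0 ≤ t ^ w - s ^ w := by linarith
  positivity

lemma Z_deriv (r l t : ℝ) (h0 : 0 < t) (h1 : t < 1) :
    HasDerivAt (fun t => Phi (r * (l - Real.sqrt (-Real.log t))))
      (gphi (r * (l - Real.sqrt (-Real.log t))) * (r / (2 * Real.sqrt (-Real.log t))) / t) t := by
  have hL : 0 < -Real.log t := by
    have := Real.log_neg h0 h1; linarith
  have d1 := (((Real.hasDerivAt_log h0.ne').neg).sqrt hL.ne').const_sub l |>.const_mul r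
  have d2 := (Phi_hasDeriv (r * (l - Real.sqrt (-Real.log t)))).comp t d1
  refine d2.congr_deriv ?_
  have hs : Real.sqrt (-Real.log t) ≠ 0 := (Real.sqrt_pos.2 hL).ne'
  simp only [Pi.neg_apply]
  field_simp

theorem BEC_lower (N : ℕ) (C : Submodule (ZMod 2) (Pattern N))
    (εstar : ℝ) (hεstar : εstar ∈ Set.Ioo (0 : ℝ) 1)
    (hhalf : Pmap C εstar = 1 / 2) :
    ∀ W : ℕ, 1 ≤ W → W ≤ N → ∀ ε : ℝ, εstar < ε → ε < 1 →
      Pmap C ε ≥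
        Phi (Real.sqrt W * (Real.sqrt (-Real.log εstar) - Real.sqrt (-Real.log ε)))
          - 2 * Real.sqrt (-Real.log εstar) * Real.sqrt W * AW C W ε := by
  intro W hW1 hWN ε hlt hε1
  have hs0 : 0 < εstar := hεstar.1
  have hLam := Lam_le C W hs0 hlt hε1
  have hmonoP : MonotoneOn (fun t => EE t (Ind (SC C))) (Set.Icc εstar ε) := by
    have hd : ∀ x ∈ Set.Icc εstar ε, HasDerivAt (fun t => EE t (Ind (SC C)))
        (EE x (hh (SC C)) / x) x := fun x hx =>
      russo (SC C) (SC_mono C) x (hs0.trans_le hx.1).ne'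
    apply monotoneOn_of_deriv_nonneg (convex_Icc _ _)
    · exact fun x hx => (hd x hx).continuousAt.continuousWithinAt
    · exact fun x hx => (hd x (interior_subset hx)).differentiableAt.differentiableWithinAt
    · intro x hx
      have hx' := interior_subset hx
      rw [(hd x hx').deriv]
      have hx0 : 0 < x := hs0.trans_le hx'.1
      exact div_nonneg (EE_nonneg hx0.le (hx'.2.trans hε1.le) (hh_nonneg _)) hx0.le
  set l := Real.sqrt (-Real.log εstar) with hl
  have hP0 : EE εstar (Ind (SC C)) = 1 / 2 := by rw [← Pmap_eq]; exact hhalf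
  have main : 0 ≤ EE ε (Ind (SC C)) + Lam C W εstar ε -
      Phi (Real.sqrt W * (l - Real.sqrt (-Real.log ε))) := by
    refine barrier (D := fun t => EE t (Ind (SC C)) + Lam C W εstar t -
      Phi (Real.sqrt W * (l - Real.sqrt (-Real.log t)))) (a := εstar) hlt.le
      (fun t ht => ((russo (SC C) (SC_mono C) t (hs0.trans_le ht.1).ne').add
        (Lam_deriv C W εstar t (hs0.trans_le ht.1).ne')).sub
        (Z_deriv (Real.sqrt W) l t (hs0.trans_le ht.1) (ht.2.trans_lt hε1))) ?_ ?_
    · simp only [← hl, hP0, sub_self, mul_zero, Phi_zero, Lam]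
      simp
    · intro t ht hneg
      have ht0 : 0 < t := hs0.trans_le ht.1
      have ht1 : t < 1 := ht.2.trans_lt hε1
      have hL : 0 < -Real.log t := by
        have := Real.log_neg ht0 ht1; linarith
      have hsq : 0 < Real.sqrt (-Real.log t) := Real.sqrt_pos.2 hL
      have hPh : 1 / 2 ≤ EE t (Ind (SC C)) := by
        rw [← hP0]
        exact hmonoP (Set.left_mem_Icc.2 hlt.le) ht ht.1
      have hLn := Lam_nonneg C W hs0 ht.1
      set z := Real.sqrt W * (l - Real.sqrt (-Real.log t)) with hz
      have hPz : EE t (Ind (SC C)) < Phi z := by linarith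
      obtain ⟨v, hv⟩ := Phi_surj (EE t (Ind (SC C))) (by linarith) (hPz.trans (Phi_lt_one z))
      have hv0 : 0 ≤ v := by
        rw [← Phi_zero, ← hv] at hPh
        exact Phi_strictMono.le_iff_le.1 hPh
      have hvz : v ≤ z := by
        rw [← hv] at hPz
        exact (Phi_strictMono.lt_iff_lt.1 hPz).le
      have hg := gphi_anti hv0 hvz
      have iso := isoperim (c := 2 * Real.sqrt (-Real.log t)) ht0 ht1 (by positivity)
        (by rw [mul_pow, Real.sq_sqrt hL.le]; linarith) (SC C) (SC_mono C) (gphi v)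
        (Or.inl ⟨v, hv, rfl⟩)
      have eb := E_bound C W ht0.le ht1.le
      have hX : gphi z / (2 * Real.sqrt (-Real.log t)) ≤
          EE t (fun ω => Real.sqrt (hh (SC C) ω)) := by
        rw [div_le_iff₀ (by positivity)]
        linarith
      have hX2 := mul_le_mul_of_nonneg_left hX (Real.sqrt_nonneg (W : ℝ))
      rw [← add_div, ← sub_div]
      apply div_nonneg _ ht0.le
      have e : gphi z * (Real.sqrt W / (2 * Real.sqrt (-Real.log t))) =
        Real.sqrt W * (gphi z / (2 * Real.sqrt (-Real.log t))) := by ring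
      rw [e]
      linarith
  rw [Pmap_eq]
  linarith

end
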